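/- The self-interaction Coulomb integral of the 2p₃ orbital equals (33|33) = (501/2560) Z₃, the Coulomb integral between 2p₃ and 2p₁ equals (33|44) = (447/2560) Z₃, and their exchange integral equals (34|43) = (27/2560) Z₃. -/

import Mathlib

open MeasureTheory Real

/-!
In dimension three the integral over `(x, y)` of a function of `|x|`, `|y|` and `|x - y|` becomes a
triple integral in the Hylleraas coordinates `s = |x| + |y|`, `t = |x| - |y|`, `u = |x - y|`, with
volume element `π² (s² - t²) u ds dt du`. Its factor `u` cancels the Coulomb singularity `1 / u`, so
that polynomials in `s`, `t`, `u` weighted by `exp (-Z s) / u` have elementary integrals.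

The products `xᵢ xⱼ yₖ yₗ` of the `2p` densities are not functions of `s`, `t`, `u`, but the kernel
`exp (-Z |x|) exp (-Z |y|) / |x - y|` is isotropic, so its tensor of fourth moments is determined by
the two invariant contractions, against `|x|² |y|²` and against `⟪x, y⟫²`, which are.
-/

open Module Set
open scoped ENNReal RealInnerProductSpace

section Fubini

variable {α : Type*} [MeasurableSpace α]

theorem measurable_setLIntegral_Ioo {a b : α → ℝ} {f : α × ℝ → ℝ≥0∞} (hf : Measurable f)
    (ha : Measurable a) (hb : Measurable b) :
    Measurable fun x ↦ ∫⁻ u in Ioo (a x) (b x), f (x, u) := by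
  have hS : MeasurableSet {p : α × ℝ | p.2 ∈ Ioo (a p.1) (b p.1)} :=
    (measurableSet_lt (ha.comp measurable_fst) measurable_snd).inter
      (measurableSet_lt measurable_snd (hb.comp measurable_fst))
  simp_rw [← lintegral_indicator measurableSet_Ioo]
  exact (hf.indicator hS).lintegral_prod_right'

theorem lintegral_setLIntegral_Ioi_abs (ν : Measure ℝ) [SFinite ν] {f : ℝ × ℝ → ℝ≥0∞}
    (hf : Measurable f) :
    ∫⁻ t, ∫⁻ u in Ioi |t|, f (t, u) ∂ν = ∫⁻ u, (∫⁻ t in Ioo (-u) u, f (t, u)) ∂ν := by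
  have hS : MeasurableSet {p : ℝ × ℝ | |p.1| < p.2} :=
    measurableSet_lt (by fun_prop) measurable_snd
  simp_rw [← lintegral_indicator measurableSet_Ioi, ← lintegral_indicator measurableSet_Ioo]
  have hswap := lintegral_lintegral_swap (μ := volume) (ν := ν)
    (f := fun t u ↦ {p : ℝ × ℝ | |p.1| < p.2}.indicator f (t, u)) (hf.indicator hS).aemeasurable
  simpa only [indicator_apply, mem_ofPred_eq, mem_Ioi, mem_Ioo, abs_lt] using hswap

theorem lintegral_setLIntegral_Ioo_abs (s : ℝ) {f : ℝ × ℝ → ℝ≥0∞} (hf : Measurable f) :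
    ∫⁻ t, ∫⁻ u in Ioo |t| s, f (t, u) = ∫⁻ u in Ioo 0 s, ∫⁻ t in Ioo (-u) u, f (t, u) := by
  have hinter (t : ℝ) : Ioi |t| ∩ Ioo 0 s = Ioo |t| s := by
    rw [Ioi_inter_Ioo, max_eq_left (abs_nonneg t)]
  simpa only [Measure.restrict_restrict measurableSet_Ioi, hinter] using
    lintegral_setLIntegral_Ioi_abs (volume.restrict (Ioo 0 s)) hf

theorem lintegral_comp_mul_sub {c : ℝ} (hc : 0 < c) (d : ℝ) {f : ℝ → ℝ≥0∞} (hf : Measurable f) :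
    ∫⁻ x, f (c * x - d) = ENNReal.ofReal c⁻¹ * ∫⁻ x, f x := by
  calc ∫⁻ x, f (c * x - d) = ∫⁻ x, f (x - d) ∂(Measure.map (c * ·) volume) :=
        (lintegral_map (f := fun x ↦ f (x - d)) (by fun_prop) (by fun_prop)).symm
    _ = ENNReal.ofReal c⁻¹ * ∫⁻ x, f x := by
      rw [Real.map_volume_mul_left hc.ne', lintegral_smul_measure, lintegral_sub_right_eq_self,
        abs_of_pos (inv_pos.2 hc), smul_eq_mul]

theorem lintegral_lintegral_comp_add_sub {f : ℝ × ℝ → ℝ≥0∞} (hf : Measurable f) :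
    ∫⁻ x, ∫⁻ y, f (x + y, x - y) = ENNReal.ofReal 2⁻¹ * ∫⁻ s, ∫⁻ t, f (s, t) := by
  calc ∫⁻ x, ∫⁻ y, f (x + y, x - y) = ∫⁻ x, ∫⁻ s, f (s, 2 * x - s) := by
        refine lintegral_congr fun x ↦ ?_
        rw [← lintegral_add_left_eq_self (fun s ↦ f (s, 2 * x - s)) x]
        simp_rw [two_mul, add_sub_add_left_eq_sub]
    _ = ∫⁻ s, ∫⁻ x, f (s, 2 * x - s) :=
        lintegral_lintegral_swap (Measurable.aemeasurable (by fun_prop))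
    _ = ∫⁻ s, ENNReal.ofReal 2⁻¹ * ∫⁻ t, f (s, t) :=
        lintegral_congr fun s ↦
          lintegral_comp_mul_sub two_pos s (f := fun t ↦ f (s, t)) (by fun_prop)
    _ = ENNReal.ofReal 2⁻¹ * ∫⁻ s, ∫⁻ t, f (s, t) := lintegral_const_mul _ (by fun_prop)

end Fubini

section Radial

variable {E : Type*} [NormedAddCommGroup E] [NormedSpace ℝ E] [FiniteDimensional ℝ E]
  [Nontrivial E] [MeasurableSpace E] [BorelSpace E]

theorem lintegral_fun_norm_addHaar (μ : Measure E) [μ.IsAddHaarMeasure] {f : ℝ → ℝ≥0∞}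
    (hf : Measurable f) :
    ∫⁻ x, f ‖x‖ ∂μ = finrank ℝ E * μ (Metric.ball 0 1) *
      ∫⁻ r in Ioi 0, ENNReal.ofReal (r ^ (finrank ℝ E - 1)) * f r := by
  calc ∫⁻ x, f ‖x‖ ∂μ = ∫⁻ x : ({0}ᶜ : Set E), f ‖x.1‖ ∂μ.comap (↑) := by
        rw [lintegral_subtype_comap (measurableSet_singleton _).compl fun x ↦ f ‖x‖,
          restrict_compl_singleton]
    _ = ∫⁻ p, f p.2 ∂μ.toSphere.prod (.volumeIoiPow (finrank ℝ E - 1)) := by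
        simpa using μ.measurePreserving_homeomorphUnitSphereProd.lintegral_comp_emb
          (Homeomorph.measurableEmbedding _) (fun p ↦ f p.2)
    _ = finrank ℝ E * μ (Metric.ball 0 1) *
        ∫⁻ r : Ioi (0 : ℝ), f r ∂.volumeIoiPow (finrank ℝ E - 1) := by
        rw [lintegral_prod _ (by fun_prop)]
        simp only [lintegral_const]
        rw [μ.toSphere_apply_univ, mul_comm]
    _ = _ := by
        rw [Measure.volumeIoiPow, lintegral_withDensity_eq_lintegral_mul _ (by fun_prop)
          (by fun_prop)]
        simp only [Pi.mul_apply]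
        rw [lintegral_subtype_comap measurableSet_Ioi
            fun r ↦ ENNReal.ofReal (r ^ (finrank ℝ E - 1)) * f r]

end Radial

section Substitution

theorem image_sqrt_sq_add_sq_Ioi (z : ℝ) :
    (fun s : ℝ ↦ √(s ^ 2 + z ^ 2)) '' Ioi 0 = Ioi |z| := by
  ext ρ
  simp only [mem_image, mem_Ioi]
  constructor
  · rintro ⟨s, hs, rfl⟩
    exact Real.lt_sqrt_of_sq_lt (by rw [sq_abs]; exact lt_add_of_pos_left _ (by positivity))
  · intro hρ
    have hsq : 0 < ρ ^ 2 - z ^ 2 := sub_pos.2 (sq_lt_sq.2 (hρ.trans_le (le_abs_self ρ)))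
    refine ⟨√(ρ ^ 2 - z ^ 2), Real.sqrt_pos.2 hsq, ?_⟩
    rw [Real.sq_sqrt hsq.le, sub_add_cancel, Real.sqrt_sq ((abs_nonneg z).trans hρ.le)]

theorem setLIntegral_mul_comp_sqrt_sq_add_sq (z : ℝ) (f : ℝ → ℝ≥0∞) :
    ∫⁻ s in Ioi 0, ENNReal.ofReal s * f √(s ^ 2 + z ^ 2) =
      ∫⁻ ρ in Ioi |z|, ENNReal.ofReal ρ * f ρ := by
  have hderiv : ∀ s ∈ Ioi (0 : ℝ),
      HasDerivWithinAt (fun s ↦ √(s ^ 2 + z ^ 2)) (s / √(s ^ 2 + z ^ 2)) (Ioi 0) s := by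
    intro s (hs : 0 < s)
    refine ((((hasDerivAt_pow 2 s).add_const (z ^ 2)).sqrt (by positivity)).hasDerivWithinAt
      ).congr_deriv ?_
    rw [Nat.cast_ofNat, pow_one, mul_div_mul_left _ _ two_ne_zero]
  have hinj : InjOn (fun s : ℝ ↦ √(s ^ 2 + z ^ 2)) (Ioi 0) := by
    intro s (hs : 0 < s) t (ht : 0 < t) hst
    have := (Real.sqrt_inj (by positivity) (by positivity)).1 hst
    exact (sq_eq_sq₀ hs.le ht.le).1 (by linarith)
  rw [← image_sqrt_sq_add_sq_Ioi,
    lintegral_image_eq_lintegral_abs_deriv_mul measurableSet_Ioi hderiv hinj]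
  refine setLIntegral_congr_fun measurableSet_Ioi fun s (hs : 0 < s) ↦ ?_
  have hpos : 0 < √(s ^ 2 + z ^ 2) := by positivity
  rw [← mul_assoc, abs_of_pos (by positivity), ← ENNReal.ofReal_mul (by positivity),
    div_mul_cancel₀ _ hpos.ne']

theorem image_law_cos_Ioo {r : ℝ} (hr : 0 < r) (ρ : ℝ) :
    (fun u ↦ (r ^ 2 + ρ ^ 2 - u ^ 2) / (2 * r)) '' Ioo |r - ρ| (r + ρ) = Ioo (-ρ) ρ := by
  ext z
  simp only [mem_image, mem_Ioo]
  constructor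
  · rintro ⟨u, hu, rfl⟩
    have hlo := sq_lt_sq' (by linarith [(abs_nonneg (r - ρ)).trans_lt hu.1, hu.2]) hu.2
    have hhi : (r - ρ) ^ 2 < u ^ 2 := sq_lt_sq.2 (hu.1.trans_le (le_abs_self u))
    constructor
    · rw [lt_div_iff₀ (by positivity)]; linarith
    · rw [div_lt_iff₀ (by positivity)]; linarith
  · rintro ⟨hz₁, hz₂⟩
    have h₁ := mul_lt_mul_of_pos_left hz₁ hr
    have h₂ := mul_lt_mul_of_pos_left hz₂ hr
    have hsq : (r - ρ) ^ 2 < r ^ 2 + ρ ^ 2 - 2 * (r * z) := by linarith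
    refine ⟨√(r ^ 2 + ρ ^ 2 - 2 * (r * z)), ⟨?_, ?_⟩, ?_⟩
    · exact Real.lt_sqrt_of_sq_lt (by rwa [sq_abs])
    · rw [Real.sqrt_lt' (by linarith)]; linarith
    · rw [Real.sq_sqrt ((sq_nonneg _).trans hsq.le)]; field_simp; ring

/-- The law of cosines turns the height `z` into the distance `u` to a point of the axis. -/
theorem setLIntegral_comp_sqrt_law_cos {r ρ : ℝ} (hr : 0 < r) (f : ℝ → ℝ≥0∞) :
    ∫⁻ z in Ioo (-ρ) ρ, f √(r ^ 2 + ρ ^ 2 - 2 * (r * z)) =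
      ∫⁻ u in Ioo |r - ρ| (r + ρ), ENNReal.ofReal (u / r) * f u := by
  have hpos {u : ℝ} (hu : u ∈ Ioo |r - ρ| (r + ρ)) : 0 < u := (abs_nonneg _).trans_lt hu.1
  have hderiv : ∀ u ∈ Ioo |r - ρ| (r + ρ),
      HasDerivWithinAt (fun u ↦ (r ^ 2 + ρ ^ 2 - u ^ 2) / (2 * r)) (-(u / r))
        (Ioo |r - ρ| (r + ρ)) u := by
    intro u _
    refine (((hasDerivAt_pow 2 u).const_sub _).div_const _).hasDerivWithinAt.congr_deriv ?_
    push_cast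
    field_simp
  have hanti : AntitoneOn (fun u ↦ (r ^ 2 + ρ ^ 2 - u ^ 2) / (2 * r))
      (Ioo |r - ρ| (r + ρ)) := by
    intro u hu v _ huv
    have := (hpos hu).le
    dsimp only
    gcongr
  rw [← image_law_cos_Ioo hr,
    lintegral_image_eq_lintegral_deriv_mul_of_antitoneOn measurableSet_Ioo hderiv hanti]
  refine setLIntegral_congr_fun measurableSet_Ioo fun u hu ↦ ?_
  rw [neg_neg, show r ^ 2 + ρ ^ 2 - 2 * (r * ((r ^ 2 + ρ ^ 2 - u ^ 2) / (2 * r))) = u ^ 2 by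
    field_simp; ring, Real.sqrt_sq (hpos hu).le]

end Substitution

section Orthogonal

variable {E : Type*} [NormedAddCommGroup E] [InnerProductSpace ℝ E] [FiniteDimensional ℝ E]
  [MeasurableSpace E] [BorelSpace E]

theorem measurePreserving_smul_add_orthogonal {e : E} (he : ‖e‖ = 1) :
    MeasurePreserving (fun p : ℝ × (ℝ ∙ e)ᗮ ↦ p.1 • e + (p.2 : E)) := by
  have hline := (LinearIsometryEquiv.toSpanUnitSingleton e he).measurePreserving
  have hsplit := (ℝ ∙ e).orthogonalDecomposition.symm.measurePreserving
  have := (hsplit.comp (WithLp.volume_preserving_toLp (ℝ ∙ e) (ℝ ∙ e)ᗮ)).comp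
    (hline.prod (.id volume))
  convert! this using 1

theorem lintegral_norm_inner_of_norm_eq_one {e : E} (he : ‖e‖ = 1) {f : ℝ × ℝ → ℝ≥0∞}
    (hf : Measurable f) :
    ∫⁻ y : E, f (‖y‖, ⟪e, y⟫) = ∫⁻ z, ∫⁻ w : (ℝ ∙ e)ᗮ, f (√(‖w‖ ^ 2 + z ^ 2), z) := by
  rw [← lintegral_prod (fun p : ℝ × (ℝ ∙ e)ᗮ ↦ f (√(‖p.2‖ ^ 2 + p.1 ^ 2), p.1))
      (Measurable.aemeasurable (by fun_prop)), ← Measure.volume_eq_prod,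
    ← (measurePreserving_smul_add_orthogonal he).lintegral_comp (by fun_prop)]
  refine lintegral_congr fun ⟨z, w⟩ ↦ ?_
  have hw : ⟪e, (w : E)⟫ = 0 := Submodule.mem_orthogonal_singleton_iff_inner_right.1 w.2
  have hnorm : ‖z • e + (w : E)‖ = √(‖w‖ ^ 2 + z ^ 2) := by
    rw [← Real.sqrt_sq (norm_nonneg _), norm_add_sq_real, inner_smul_left, hw, norm_smul, he]
    simp [add_comm]
  simp [hnorm, inner_add_right, inner_smul_right, hw, he]

end Orthogonal

section Hylleraas

variable {E : Type*} [NormedAddCommGroup E] [InnerProductSpace ℝ E] [FiniteDimensional ℝ E]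
  [MeasurableSpace E] [BorelSpace E]

theorem lintegral_fun_norm_of_finrank_eq_two (hE : finrank ℝ E = 2) {f : ℝ → ℝ≥0∞}
    (hf : Measurable f) :
    ∫⁻ x : E, f ‖x‖ = ENNReal.ofReal (2 * π) * ∫⁻ r in Ioi 0, ENNReal.ofReal r * f r := by
  have : Nontrivial E := nontrivial_of_finrank_pos (R := ℝ) (by lia)
  rw [lintegral_fun_norm_addHaar volume hf,
    InnerProductSpace.volume_ball_of_dim_even (k := 1) (by lia), hE,
    ENNReal.ofReal_mul zero_le_two]
  simp

theorem lintegral_fun_norm_of_finrank_eq_three (hE : finrank ℝ E = 3) {f : ℝ → ℝ≥0∞}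
    (hf : Measurable f) :
    ∫⁻ x : E, f ‖x‖ = ENNReal.ofReal (4 * π) * ∫⁻ r in Ioi 0, ENNReal.ofReal (r ^ 2) * f r := by
  have : Nontrivial E := nontrivial_of_finrank_pos (R := ℝ) (by lia)
  have hvol : (3 : ℝ≥0∞) * volume (Metric.ball (0 : E) 1) = ENNReal.ofReal (4 * π) := by
    rw [InnerProductSpace.volume_ball_of_dim_odd (k := 1) (by lia), ← ENNReal.ofReal_ofNat,
      ← ENNReal.ofReal_pow zero_le_one, ← ENNReal.ofReal_mul (by positivity),
      ← ENNReal.ofReal_mul (by positivity), hE]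
    congr 1
    norm_num [Nat.doubleFactorial]
    ring
  rw [lintegral_fun_norm_addHaar volume hf, hE, Nat.cast_ofNat, hvol]

theorem lintegral_norm_inner_of_finrank_eq_three (hE : finrank ℝ E = 3) {e : E} (he : ‖e‖ = 1)
    {f : ℝ × ℝ → ℝ≥0∞} (hf : Measurable f) :
    ∫⁻ y : E, f (‖y‖, ⟪e, y⟫) =
      ∫⁻ ρ, ∫⁻ z in Ioo (-ρ) ρ, ENNReal.ofReal (2 * π * ρ) * f (ρ, z) := by
  have : Fact (finrank ℝ E = 2 + 1) := ⟨hE⟩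
  have hperp : finrank ℝ (ℝ ∙ e)ᗮ = 2 :=
    Submodule.finrank_orthogonal_span_singleton (norm_pos_iff.1 (he ▸ one_pos))
  rw [lintegral_norm_inner_of_norm_eq_one he hf, ← lintegral_setLIntegral_Ioi_abs volume
    (f := fun p ↦ ENNReal.ofReal (2 * π * p.2) * f (p.2, p.1)) (by fun_prop)]
  refine lintegral_congr fun z ↦ ?_
  simp_rw [ENNReal.ofReal_mul two_pi_pos.le, mul_assoc]
  rw [lintegral_fun_norm_of_finrank_eq_two hperp (f := fun s ↦ f (√(s ^ 2 + z ^ 2), z))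
      (by fun_prop),
    setLIntegral_mul_comp_sqrt_sq_add_sq z (fun ρ ↦ f (ρ, z)), lintegral_const_mul _ (by fun_prop)]

theorem lintegral_norm_norm_sub (hE : finrank ℝ E = 3) {x : E} (hx : x ≠ 0)
    {f : ℝ × ℝ → ℝ≥0∞} (hf : Measurable f) :
    ∫⁻ y : E, f (‖y‖, ‖x - y‖) = ∫⁻ ρ, ∫⁻ u in Ioo |‖x‖ - ρ| (‖x‖ + ρ),
      ENNReal.ofReal (2 * π / ‖x‖ * (ρ * u)) * f (ρ, u) := by
  have hr : 0 < ‖x‖ := norm_pos_iff.2 hx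
  have he : ‖‖x‖⁻¹ • x‖ = 1 := norm_smul_inv_norm hx
  have hdist (y : E) : ‖x - y‖ = √(‖x‖ ^ 2 + ‖y‖ ^ 2 - 2 * (‖x‖ * ⟪‖x‖⁻¹ • x, y⟫)) := by
    rw [inner_smul_left, conj_trivial, mul_inv_cancel_left₀ hr.ne', ← Real.sqrt_sq (norm_nonneg _),
      norm_sub_sq_real]
    ring_nf
  simp_rw [hdist]
  rw [lintegral_norm_inner_of_finrank_eq_three hE he
    (f := fun p ↦ f (p.1, √(‖x‖ ^ 2 + p.1 ^ 2 - 2 * (‖x‖ * p.2)))) (by fun_prop)]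
  refine lintegral_congr fun ρ ↦ ?_
  rw [lintegral_const_mul _ (by fun_prop), setLIntegral_comp_sqrt_law_cos hr (fun u ↦ f (ρ, u)),
    ← lintegral_const_mul _ (by fun_prop)]
  refine setLIntegral_congr_fun measurableSet_Ioo fun u hu ↦ ?_
  have hu₀ : 0 < u := (abs_nonneg _).trans_lt hu.1
  rw [← mul_assoc, ← ENNReal.ofReal_mul' (by positivity)]
  congr 2
  ring

theorem lintegral_norm_norm_norm_sub (hE : finrank ℝ E = 3) {f : ℝ × ℝ × ℝ → ℝ≥0∞}
    (hf : Measurable f) :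
    ∫⁻ x : E, ∫⁻ y : E, f (‖x‖, ‖y‖, ‖x - y‖) =
      ∫⁻ r in Ioi 0, ∫⁻ ρ, ∫⁻ u in Ioo |r - ρ| (r + ρ),
        ENNReal.ofReal (8 * π ^ 2 * (r * ρ * u)) * f (r, ρ, u) := by
  have : Nontrivial E := nontrivial_of_finrank_pos (R := ℝ) (by lia)
  let g : ℝ × ℝ → ℝ≥0∞ := fun p ↦ ∫⁻ u in Ioo |p.1 - p.2| (p.1 + p.2),
    ENNReal.ofReal (2 * π / p.1 * (p.2 * u)) * f (p.1, p.2, u)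
  have hg : Measurable g := measurable_setLIntegral_Ioo
    (f := fun q : (ℝ × ℝ) × ℝ ↦
      ENNReal.ofReal (2 * π / q.1.1 * (q.1.2 * q.2)) * f (q.1.1, q.1.2, q.2))
    (by fun_prop) (by fun_prop) (by fun_prop)
  have hinner : ∀ᵐ x : E, ∫⁻ y : E, f (‖x‖, ‖y‖, ‖x - y‖) = ∫⁻ ρ, g (‖x‖, ρ) := by
    filter_upwards [Measure.ae_ne volume 0] with x hx
    exact lintegral_norm_norm_sub hE hx (f := fun p ↦ f (‖x‖, p)) (by fun_prop)
  rw [lintegral_congr_ae hinner, lintegral_fun_norm_of_finrank_eq_three hE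
    (f := fun r ↦ ∫⁻ ρ, g (r, ρ)) (by fun_prop), ← lintegral_const_mul _ (by fun_prop)]
  refine setLIntegral_congr_fun measurableSet_Ioi fun r (hr : 0 < r) ↦ ?_
  rw [← mul_assoc, ← ENNReal.ofReal_mul (by positivity), ← lintegral_const_mul _ (by fun_prop)]
  refine lintegral_congr fun ρ ↦ ?_
  rw [← lintegral_const_mul _ (by fun_prop)]
  refine lintegral_congr fun u ↦ ?_
  rw [← mul_assoc, ← ENNReal.ofReal_mul (by positivity)]
  congr 2
  field_simp
  ring

theorem lintegral_hylleraas (hE : finrank ℝ E = 3) {f : ℝ × ℝ × ℝ → ℝ≥0∞} (hf : Measurable f) :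
    ∫⁻ x : E, ∫⁻ y : E, f (‖x‖ + ‖y‖, ‖x‖ - ‖y‖, ‖x - y‖) =
      ∫⁻ s, ∫⁻ u in Ioo 0 s, ∫⁻ t in Ioo (-u) u,
        ENNReal.ofReal (π ^ 2 * (s ^ 2 - t ^ 2) * u) * f (s, t, u) := by
  let g : ℝ × ℝ → ℝ≥0∞ := fun p ↦ ∫⁻ u in Ioo |p.2| p.1,
    ENNReal.ofReal (2 * (π ^ 2 * (p.1 ^ 2 - p.2 ^ 2) * u)) * f (p.1, p.2, u)
  have hg : Measurable g := measurable_setLIntegral_Ioo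
    (f := fun q : (ℝ × ℝ) × ℝ ↦
      ENNReal.ofReal (2 * (π ^ 2 * (q.1.1 ^ 2 - q.1.2 ^ 2) * q.2)) * f (q.1.1, q.1.2, q.2))
    (by fun_prop) (by fun_prop) (by fun_prop)
  have hvol (r ρ u : ℝ) :
      2 * (π ^ 2 * ((r + ρ) ^ 2 - (r - ρ) ^ 2) * u) = 8 * π ^ 2 * (r * ρ * u) := by
    ring
  have hsupport : (fun r ↦ ∫⁻ ρ, g (r + ρ, r - ρ)).support ⊆ Ioi 0 := by
    refine Function.support_subset_iff'.2 fun r hr ↦ ?_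
    have hempty (ρ : ℝ) : Ioo |r - ρ| (r + ρ) = ∅ :=
      Ioo_eq_empty (by linarith [neg_abs_le (r - ρ), notMem_Ioi.1 hr])
    simp [g, hempty]
  calc ∫⁻ x : E, ∫⁻ y : E, f (‖x‖ + ‖y‖, ‖x‖ - ‖y‖, ‖x - y‖)
      = ∫⁻ r in Ioi 0, ∫⁻ ρ, g (r + ρ, r - ρ) := by
        rw [lintegral_norm_norm_norm_sub hE
          (f := fun q ↦ f (q.1 + q.2.1, q.1 - q.2.1, q.2.2)) (by fun_prop)]
        simp only [g, hvol]
    _ = ENNReal.ofReal 2⁻¹ * ∫⁻ s, ∫⁻ t, g (s, t) := by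
        rw [setLIntegral_eq_of_support_subset hsupport, lintegral_lintegral_comp_add_sub hg]
    _ = ∫⁻ s, ∫⁻ t, ∫⁻ u in Ioo |t| s,
          ENNReal.ofReal (π ^ 2 * (s ^ 2 - t ^ 2) * u) * f (s, t, u) := by
        rw [← lintegral_const_mul _ (by fun_prop)]
        refine lintegral_congr fun s ↦ ?_
        rw [← lintegral_const_mul _ (by fun_prop)]
        refine lintegral_congr fun t ↦ ?_
        rw [← lintegral_const_mul _ (by fun_prop)]
        refine lintegral_congr fun u ↦ ?_
        rw [← mul_assoc, ← ENNReal.ofReal_mul (by positivity), inv_mul_cancel_left₀ two_ne_zero]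
    _ = _ := lintegral_congr fun s ↦ lintegral_setLIntegral_Ioo_abs s
        (f := fun p ↦ ENNReal.ofReal (π ^ 2 * (s ^ 2 - p.1 ^ 2) * p.2) * f (s, p.1, p.2))
        (by fun_prop)

end Hylleraas

section SlaterIntegrals

theorem setLIntegral_Ioo_ofReal {a b : ℝ} (hab : a ≤ b) {f : ℝ → ℝ}
    (hf : IntervalIntegrable f volume a b) (hnonneg : ∀ t ∈ Ioo a b, 0 ≤ f t) :
    ∫⁻ t in Ioo a b, ENNReal.ofReal (f t) = ENNReal.ofReal (∫ t in a..b, f t) := by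
  rw [intervalIntegral.integral_of_le hab, ← restrict_Ioo_eq_restrict_Ioc,
    ofReal_integral_eq_lintegral_ofReal (hf.1.mono_set Ioo_subset_Ioc_self)
      (ae_restrict_of_forall_mem measurableSet_Ioo hnonneg)]

theorem continuous_integral_neg_self {f : ℝ × ℝ → ℝ} (hf : Continuous f) :
    Continuous fun u ↦ ∫ t in (-u)..u, f (t, u) := by
  have hprimitive {b : ℝ → ℝ} (hb : Continuous b) : Continuous fun u ↦ ∫ t in 0..b u, f (t, u) :=
    intervalIntegral.continuous_parametric_intervalIntegral_of_continuous
      (f := fun u t ↦ f (t, u)) (by fun_prop) hb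
  have hint (u a b : ℝ) : IntervalIntegrable (fun t ↦ f (t, u)) volume a b :=
    Continuous.intervalIntegrable (by fun_prop) a b
  refine ((hprimitive continuous_id).sub (hprimitive continuous_neg)).congr fun u ↦ ?_
  exact intervalIntegral.integral_interval_sub_left (hint u 0 u) (hint u 0 (-u))

theorem setLIntegral_Ioo_setLIntegral_Ioo_ofReal {s : ℝ} (hs : 0 ≤ s) {f : ℝ × ℝ → ℝ}
    (hf : Continuous f) (hnonneg : ∀ u ∈ Ioo 0 s, ∀ t ∈ Ioo (-u) u, 0 ≤ f (t, u)) :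
    ∫⁻ u in Ioo 0 s, ∫⁻ t in Ioo (-u) u, ENNReal.ofReal (f (t, u)) =
      ENNReal.ofReal (∫ u in 0..s, ∫ t in (-u)..u, f (t, u)) := by
  have hinner : ∀ u ∈ Ioo 0 s, ∫⁻ t in Ioo (-u) u, ENNReal.ofReal (f (t, u)) =
      ENNReal.ofReal (∫ t in (-u)..u, f (t, u)) := fun u hu ↦
    setLIntegral_Ioo_ofReal (by linarith [hu.1])
      (Continuous.intervalIntegrable (by fun_prop) _ _) (hnonneg u hu)
  rw [setLIntegral_congr_fun measurableSet_Ioo hinner,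
    setLIntegral_Ioo_ofReal hs ((continuous_integral_neg_self hf).intervalIntegrable _ _)]
  intro u hu
  rw [intervalIntegral.integral_of_le (by linarith [hu.1]), ← restrict_Ioo_eq_restrict_Ioc]
  exact setIntegral_nonneg measurableSet_Ioo (hnonneg u hu)

theorem setLIntegral_hylleraas_div {s w : ℝ} (hs : 0 ≤ s) (hw : 0 ≤ w) {P : ℝ × ℝ → ℝ}
    (hP : Continuous P) (hP₀ : ∀ q, 0 ≤ P q) :
    ∫⁻ u in Ioo 0 s, ∫⁻ t in Ioo (-u) u, ENNReal.ofReal (π ^ 2 * (s ^ 2 - t ^ 2) * u) *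
        ENNReal.ofReal (P (t, u) * (w / u)) =
      ENNReal.ofReal (π ^ 2 * w * ∫ u in 0..s, ∫ t in (-u)..u, (s ^ 2 - t ^ 2) * P (t, u)) := by
  simp only [← intervalIntegral.integral_const_mul]
  rw [← setLIntegral_Ioo_setLIntegral_Ioo_ofReal hs
    (f := fun p ↦ π ^ 2 * w * ((s ^ 2 - p.1 ^ 2) * P p)) (by fun_prop)]
  · refine setLIntegral_congr_fun measurableSet_Ioo fun u hu ↦
      setLIntegral_congr_fun measurableSet_Ioo fun t _ ↦ ?_
    have := hP₀ (t, u)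
    have := hu.1
    rw [← ENNReal.ofReal_mul' (by positivity)]
    congr 1
    field_simp
  · intro u hu t ht
    have hts : t ^ 2 ≤ s ^ 2 := sq_le_sq' (by linarith [hu.2, ht.1]) (by linarith [hu.2, ht.2])
    exact mul_nonneg (by positivity) (mul_nonneg (sub_nonneg.2 hts) (hP₀ _))

theorem lintegral_Ioi_pow_mul_exp_neg (n : ℕ) {Z : ℝ} (hZ : 0 < Z) :
    ∫⁻ s in Ioi 0, ENNReal.ofReal (s ^ n * exp (-Z * s)) =
      ENNReal.ofReal (n.factorial / Z ^ (n + 1)) := by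
  have hint : IntegrableOn (fun s : ℝ ↦ s ^ n * exp (-Z * s)) (Ioi 0) := by
    simpa using integrableOn_rpow_mul_exp_neg_mul_rpow (s := n) (p := 1) (b := Z)
      (by linarith [n.cast_nonneg (α := ℝ)]) one_pos hZ
  have hGamma := integral_rpow_mul_exp_neg_mul_Ioi (a := n + 1) (by positivity) hZ
  rw [Gamma_nat_eq_factorial, ← Nat.cast_add_one, rpow_natCast, one_div, inv_pow,
    inv_mul_eq_div] at hGamma
  rw [← ofReal_integral_eq_lintegral_ofReal hint
    (ae_restrict_of_forall_mem measurableSet_Ioi fun s (hs : 0 < s) ↦ by positivity), ← hGamma]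
  simp [rpow_natCast]

/-- The Coulomb interaction `1 / |x - y|` weighted by the densities `exp (-Z |x|)` and
`exp (-Z |y|)` of two spherical Slater orbitals. -/
noncomputable def slaterCoulombKernel {E : Type*} [NormedAddCommGroup E] (Z : ℝ) (p : E × E) : ℝ :=
  exp (-Z * ‖p.1‖) * exp (-Z * ‖p.2‖) / ‖p.1 - p.2‖

variable {E : Type*} [NormedAddCommGroup E]

theorem slaterCoulombKernel_nonneg (Z : ℝ) (p : E × E) : 0 ≤ slaterCoulombKernel Z p := by
  unfold slaterCoulombKernel
  positivity

@[fun_prop]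
theorem measurable_slaterCoulombKernel [SecondCountableTopology E] [MeasurableSpace E]
    [OpensMeasurableSpace E] (Z : ℝ) : Measurable (slaterCoulombKernel Z : E × E → ℝ) := by
  unfold slaterCoulombKernel
  exact (Continuous.measurable (by fun_prop)).div (Continuous.measurable (by fun_prop))

variable [InnerProductSpace ℝ E] [FiniteDimensional ℝ E] [MeasurableSpace E] [BorelSpace E]

theorem lintegral_mul_slaterCoulombKernel (hE : finrank ℝ E = 3) {Z : ℝ} (hZ : 0 < Z)
    {P : ℝ × ℝ × ℝ → ℝ} (hP : Continuous P) (hP₀ : ∀ q, 0 ≤ P q) {c : ℝ} {n : ℕ}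
    (hPc : ∀ s > 0, ∫ u in 0..s, ∫ t in (-u)..u, (s ^ 2 - t ^ 2) * P (s, t, u) = c * s ^ n) :
    ∫⁻ p : E × E, ENNReal.ofReal
        (P (‖p.1‖ + ‖p.2‖, ‖p.1‖ - ‖p.2‖, ‖p.1 - p.2‖) * slaterCoulombKernel Z p) =
      ENNReal.ofReal (π ^ 2 * c * (n.factorial / Z ^ (n + 1))) := by
  have hexp (x y : E) : exp (-Z * ‖x‖) * exp (-Z * ‖y‖) = exp (-Z * (‖x‖ + ‖y‖)) := by
    rw [← Real.exp_add, mul_add]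
  rw [Measure.volume_eq_prod, lintegral_prod _ (Measurable.aemeasurable (by fun_prop))]
  simp only [slaterCoulombKernel, hexp]
  rw [lintegral_hylleraas hE (f := fun q ↦ ENNReal.ofReal (P q * (exp (-Z * q.1) / q.2.2)))
      (by fun_prop)]
  let F : ℝ → ℝ≥0∞ := fun s ↦ ∫⁻ u in Ioo 0 s, ∫⁻ t in Ioo (-u) u,
    ENNReal.ofReal (π ^ 2 * (s ^ 2 - t ^ 2) * u) *
      ENNReal.ofReal (P (s, t, u) * (exp (-Z * s) / u))
  have hsupport : F.support ⊆ Ioi 0 :=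
    Function.support_subset_iff'.2 fun s hs ↦ by
      simp [F, Ioo_eq_empty (notMem_Ioi.1 hs).not_gt]
  have hF : ∀ s ∈ Ioi 0, F s =
      ENNReal.ofReal (π ^ 2 * c) * ENNReal.ofReal (s ^ n * exp (-Z * s)) := by
    intro s (hs : 0 < s)
    have hslice := setLIntegral_hylleraas_div hs.le (exp_pos (-Z * s)).le
      (P := fun q ↦ P (s, q.1, q.2)) (by fun_prop) (fun _ ↦ hP₀ _)
    rw [hPc s hs] at hslice
    rw [← ENNReal.ofReal_mul' (by positivity)]
    refine hslice.trans ?_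
    congr 1
    ring
  rw [← setLIntegral_eq_of_support_subset hsupport, setLIntegral_congr_fun measurableSet_Ioi hF,
    lintegral_const_mul _ (by fun_prop), lintegral_Ioi_pow_mul_exp_neg n hZ,
    ← ENNReal.ofReal_mul' (by positivity)]

theorem integrable_mul_slaterCoulombKernel_and_integral_eq (hE : finrank ℝ E = 3) {Z : ℝ}
    (hZ : 0 < Z) {P : ℝ × ℝ × ℝ → ℝ} (hP : Continuous P) (hP₀ : ∀ q, 0 ≤ P q) {c : ℝ} (hc : 0 ≤ c)
    {n : ℕ}
    (hPc : ∀ s > 0, ∫ u in 0..s, ∫ t in (-u)..u, (s ^ 2 - t ^ 2) * P (s, t, u) = c * s ^ n) :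
    Integrable (fun p : E × E ↦
        P (‖p.1‖ + ‖p.2‖, ‖p.1‖ - ‖p.2‖, ‖p.1 - p.2‖) * slaterCoulombKernel Z p) ∧
      ∫ p : E × E, P (‖p.1‖ + ‖p.2‖, ‖p.1‖ - ‖p.2‖, ‖p.1 - p.2‖) * slaterCoulombKernel Z p =
        π ^ 2 * c * (n.factorial / Z ^ (n + 1)) := by
  have hl := lintegral_mul_slaterCoulombKernel hE hZ hP hP₀ hPc
  have hmeas : Measurable fun p : E × E ↦
      P (‖p.1‖ + ‖p.2‖, ‖p.1‖ - ‖p.2‖, ‖p.1 - p.2‖) * slaterCoulombKernel Z p := by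
    fun_prop
  have hnonneg : 0 ≤ᵐ[volume] fun p : E × E ↦
      P (‖p.1‖ + ‖p.2‖, ‖p.1‖ - ‖p.2‖, ‖p.1 - p.2‖) * slaterCoulombKernel Z p :=
    .of_forall fun p ↦ mul_nonneg (hP₀ _) (slaterCoulombKernel_nonneg Z p)
  refine ⟨⟨hmeas.aestronglyMeasurable, ?_⟩, ?_⟩
  · rw [hasFiniteIntegral_iff_ofReal hnonneg, hl]
    exact ENNReal.ofReal_lt_top
  · rw [integral_eq_lintegral_of_nonneg_ae hnonneg hmeas.aestronglyMeasurable, hl,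
      ENNReal.toReal_ofReal (by positivity)]

end SlaterIntegrals

section SlaterMoments

theorem integral_even_sextic (a b c d u : ℝ) :
    ∫ t in (-u)..u, (a + b * t ^ 2 + c * t ^ 4 + d * t ^ 6) =
      2 * (a * u + b / 3 * u ^ 3 + c / 5 * u ^ 5 + d / 7 * u ^ 7) := by
  simp (disch := exact Continuous.intervalIntegrable (by fun_prop) _ _) only
    [intervalIntegral.integral_add, intervalIntegral.integral_const_mul, integral_pow,
    intervalIntegral.integral_const, smul_eq_mul]
  ring

theorem integral_odd_septic (a b c d s : ℝ) :
    ∫ u in 0..s, (a * u + b * u ^ 3 + c * u ^ 5 + d * u ^ 7) =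
      a / 2 * s ^ 2 + b / 4 * s ^ 4 + c / 6 * s ^ 6 + d / 8 * s ^ 8 := by
  simp (disch := exact Continuous.intervalIntegrable (by fun_prop) _ _) only
    [intervalIntegral.integral_add, intervalIntegral.integral_const_mul,
    intervalIntegral.integral_const_mul a fun u ↦ u, integral_pow, integral_id]
  ring

theorem integral_hylleraas_norm_sq_mul_norm_sq (s : ℝ) :
    ∫ u in 0..s, ∫ t in (-u)..u, (s ^ 2 - t ^ 2) * ((s ^ 2 - t ^ 2) / 4) ^ 2 =
      93 / 2240 * s ^ 8 := by
  have hinner (u : ℝ) : ∫ t in (-u)..u, (s ^ 2 - t ^ 2) * ((s ^ 2 - t ^ 2) / 4) ^ 2 =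
      s ^ 6 / 8 * u + -s ^ 4 / 8 * u ^ 3 + 3 * s ^ 2 / 40 * u ^ 5 + -1 / 56 * u ^ 7 := by
    convert! integral_even_sextic (s ^ 6 / 16) (-3 * s ^ 4 / 16) (3 * s ^ 2 / 16) (-1 / 16) u
      using 1
    · congr with t; ring
    · ring
  simp only [hinner, integral_odd_septic]
  ring

theorem integral_hylleraas_inner_sq (s : ℝ) :
    ∫ u in 0..s, ∫ t in (-u)..u, (s ^ 2 - t ^ 2) * ((s ^ 2 + t ^ 2 - 2 * u ^ 2) / 4) ^ 2 =
      37 / 2240 * s ^ 8 := by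
  have hinner (u : ℝ) :
      ∫ t in (-u)..u, (s ^ 2 - t ^ 2) * ((s ^ 2 + t ^ 2 - 2 * u ^ 2) / 4) ^ 2 =
        s ^ 6 / 8 * u + -11 * s ^ 4 / 24 * u ^ 3 + 19 * s ^ 2 / 40 * u ^ 5 +
          -71 / 840 * u ^ 7 := by
    convert! integral_even_sextic (s ^ 2 * (s ^ 2 - 2 * u ^ 2) ^ 2 / 16)
      ((s ^ 2 - 2 * u ^ 2) * (s ^ 2 + 2 * u ^ 2) / 16) ((4 * u ^ 2 - s ^ 2) / 16) (-1 / 16) u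
      using 1
    · congr with t; ring
    · ring
  simp only [hinner, integral_odd_septic]
  ring

variable {E : Type*} [NormedAddCommGroup E] [InnerProductSpace ℝ E]

theorem inner_eq_hylleraas (x y : E) :
    ⟪x, y⟫ = ((‖x‖ + ‖y‖) ^ 2 + (‖x‖ - ‖y‖) ^ 2 - 2 * ‖x - y‖ ^ 2) / 4 := by
  rw [norm_sub_sq_real]
  ring

variable [FiniteDimensional ℝ E] [MeasurableSpace E] [BorelSpace E]

theorem integrable_norm_sq_mul_norm_sq_mul_slaterCoulombKernel (hE : finrank ℝ E = 3) {Z : ℝ}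
    (hZ : 0 < Z) :
    Integrable fun p : E × E ↦ ‖p.1‖ ^ 2 * ‖p.2‖ ^ 2 * slaterCoulombKernel Z p := by
  have h := (integrable_mul_slaterCoulombKernel_and_integral_eq hE hZ
    (P := fun q ↦ ((q.1 ^ 2 - q.2.1 ^ 2) / 4) ^ 2) (by fun_prop) (fun _ ↦ sq_nonneg _)
    (by norm_num) fun s _ ↦ integral_hylleraas_norm_sq_mul_norm_sq s).1
  convert! h using 3 with p
  ring

theorem integral_norm_sq_mul_norm_sq_mul_slaterCoulombKernel (hE : finrank ℝ E = 3) {Z : ℝ}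
    (hZ : 0 < Z) :
    ∫ p : E × E, ‖p.1‖ ^ 2 * ‖p.2‖ ^ 2 * slaterCoulombKernel Z p = 1674 * π ^ 2 / Z ^ 9 := by
  have h := (integrable_mul_slaterCoulombKernel_and_integral_eq hE hZ
    (P := fun q ↦ ((q.1 ^ 2 - q.2.1 ^ 2) / 4) ^ 2) (by fun_prop) (fun _ ↦ sq_nonneg _)
    (by norm_num) fun s _ ↦ integral_hylleraas_norm_sq_mul_norm_sq s).2
  convert! h using 1
  · congr with p; ring
  · norm_num [Nat.factorial]; ring

theorem integral_inner_sq_mul_slaterCoulombKernel (hE : finrank ℝ E = 3) {Z : ℝ} (hZ : 0 < Z) :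
    ∫ p : E × E, ⟪p.1, p.2⟫ ^ 2 * slaterCoulombKernel Z p = 666 * π ^ 2 / Z ^ 9 := by
  simp only [inner_eq_hylleraas]
  rw [(integrable_mul_slaterCoulombKernel_and_integral_eq hE hZ
    (P := fun q ↦ ((q.1 ^ 2 + q.2.1 ^ 2 - 2 * q.2.2 ^ 2) / 4) ^ 2) (by fun_prop)
    (fun _ ↦ sq_nonneg _) (by norm_num) fun s _ ↦ integral_hylleraas_inner_sq s).2]
  norm_num [Nat.factorial]
  ring

end SlaterMoments

section IsotropicMoments

/-- A two-point kernel is isotropic if it is invariant under simultaneous linear isometries. -/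
def IsIsotropic {E : Type*} [NormedAddCommGroup E] [InnerProductSpace ℝ E]
    (K : E × E → ℝ) : Prop :=
  ∀ (R : E ≃ₗᵢ[ℝ] E) (p : E × E), K (R p.1, R p.2) = K p

theorem isIsotropic_slaterCoulombKernel {E : Type*} [NormedAddCommGroup E] [InnerProductSpace ℝ E]
    (Z : ℝ) : IsIsotropic (slaterCoulombKernel Z : E × E → ℝ) := by
  intro R p
  simp only [slaterCoulombKernel, ← map_sub, R.norm_map]

variable {ι : Type*} [Fintype ι]

/-- The fourth-order moments `∫∫ xᵢ xⱼ yₖ yₗ K(x, y) dx dy` of a two-point kernel. -/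
noncomputable def pairMoment (K : EuclideanSpace ℝ ι × EuclideanSpace ℝ ι → ℝ) (i j k l : ι) : ℝ :=
  ∫ p, p.1 i * p.1 j * (p.2 k * p.2 l) * K p

variable {K : EuclideanSpace ℝ ι × EuclideanSpace ℝ ι → ℝ}

theorem integrable_coord_mul (hint : Integrable fun p ↦ ‖p.1‖ ^ 2 * ‖p.2‖ ^ 2 * K p)
    (i j k l : ι) : Integrable fun p ↦ p.1 i * p.1 j * (p.2 k * p.2 l) * K p := by
  have hbound (p : EuclideanSpace ℝ ι × EuclideanSpace ℝ ι) :
      ‖p.1 i * p.1 j * (p.2 k * p.2 l)‖ ≤ ‖p.1‖ ^ 2 * ‖p.2‖ ^ 2 := by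
    simp only [norm_mul, sq]
    gcongr <;> exact PiLp.norm_apply_le _ _
  refine (hint.bdd_mul (c := 1)
    (f := fun p ↦ p.1 i * p.1 j * (p.2 k * p.2 l) / (‖p.1‖ ^ 2 * ‖p.2‖ ^ 2))
    (Measurable.aestronglyMeasurable (by fun_prop)) (.of_forall fun p ↦ ?_)).congr
    (.of_forall fun p ↦ ?_)
  · rw [norm_div, Real.norm_of_nonneg (by positivity : 0 ≤ ‖p.1‖ ^ 2 * ‖p.2‖ ^ 2)]
    exact div_le_one_of_le₀ (hbound p) (by positivity)
  · dsimp only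
    rw [← mul_assoc, div_mul_cancel_of_imp]
    intro h
    exact norm_le_zero_iff.1 (h ▸ hbound p)

theorem pairMoment_comp (hK : IsIsotropic K) (R : EuclideanSpace ℝ ι ≃ₗᵢ[ℝ] EuclideanSpace ℝ ι)
    (i j k l : ι) :
    ∫ p, R p.1 i * R p.1 j * (R p.2 k * R p.2 l) * K p = pairMoment K i j k l := by
  simpa only [Prod.map, hK R] using! (R.measurePreserving.prod R.measurePreserving).integral_comp
    (R.toHomeomorph.prodCongr R.toHomeomorph).measurableEmbedding
    fun p ↦ p.1 i * p.1 j * (p.2 k * p.2 l) * K p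

theorem pairMoment_perm (hK : IsIsotropic K) (σ : Equiv.Perm ι) (i j k l : ι) :
    pairMoment K (σ i) (σ j) (σ k) (σ l) = pairMoment K i j k l := by
  rw [← pairMoment_comp hK (LinearIsometryEquiv.piLpCongrLeft 2 ℝ ℝ σ.symm) i j k l]
  simp [pairMoment, LinearIsometryEquiv.piLpCongrLeft_apply]

theorem sum_sum_pairMoment_direct (hint : Integrable fun p ↦ ‖p.1‖ ^ 2 * ‖p.2‖ ^ 2 * K p) :
    ∑ i, ∑ k, pairMoment K i i k k = ∫ p, ‖p.1‖ ^ 2 * ‖p.2‖ ^ 2 * K p := by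
  have hcoord := integrable_coord_mul hint
  simp only [pairMoment]
  simp_rw [← integral_finsetSum Finset.univ fun k _ ↦ hcoord _ _ k k]
  rw [← integral_finsetSum _ fun i _ ↦ integrable_finsetSum _ fun k _ ↦ hcoord i i k k]
  congr with p
  rw [EuclideanSpace.real_norm_sq_eq, EuclideanSpace.real_norm_sq_eq, Finset.sum_mul_sum]
  simp only [Finset.sum_mul, sq]

theorem sum_sum_pairMoment_exchange (hint : Integrable fun p ↦ ‖p.1‖ ^ 2 * ‖p.2‖ ^ 2 * K p) :
    ∑ i, ∑ k, pairMoment K i k k i = ∫ p, ⟪p.1, p.2⟫ ^ 2 * K p := by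
  have hcoord := integrable_coord_mul hint
  simp only [pairMoment]
  simp_rw [← integral_finsetSum Finset.univ fun k _ ↦ hcoord _ k k _]
  rw [← integral_finsetSum _ fun i _ ↦ integrable_finsetSum _ fun k _ ↦ hcoord i k k i]
  congr with p
  rw [PiLp.inner_apply, sq, Finset.sum_mul_sum]
  simp only [Finset.sum_mul, RCLike.inner_apply, conj_trivial]
  refine Finset.sum_congr rfl fun i _ ↦ Finset.sum_congr rfl fun k _ ↦ ?_
  ring

theorem pairMoment_self_eq (hK : IsIsotropic K) (i j : ι) :
    pairMoment K i i i i = pairMoment K j j j j := by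
  classical simpa using pairMoment_perm hK (Equiv.swap j i) j j j j

theorem pairMoment_direct_eq (hK : IsIsotropic K) {i j k l : ι} (hij : i ≠ j) (hkl : k ≠ l) :
    pairMoment K i i j j = pairMoment K k k l l := by
  obtain ⟨σ, rfl, rfl⟩ := MulAction.is_two_pretransitive_iff.1
    (Equiv.Perm.isMultiplyPretransitive ι 2) hij hkl
  exact (pairMoment_perm hK σ i i j j).symm

theorem pairMoment_exchange_eq (hK : IsIsotropic K) {i j k l : ι} (hij : i ≠ j) (hkl : k ≠ l) :
    pairMoment K i j j i = pairMoment K k l l k := by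
  obtain ⟨σ, rfl, rfl⟩ := MulAction.is_two_pretransitive_iff.1
    (Equiv.Perm.isMultiplyPretransitive ι 2) hij hkl
  exact (pairMoment_perm hK σ i j j i).symm

/-- The witness is the reflection exchanging the `i`-th axis with the diagonal of the `i, j`
plane. -/
theorem exists_linearIsometryEquiv_apply_eq_div_sqrt_two {i j : ι} (hij : i ≠ j) :
    ∃ R : EuclideanSpace ℝ ι ≃ₗᵢ[ℝ] EuclideanSpace ℝ ι,
      ∀ x, R x i = (x i + x j) / √2 ∧ R x j = (x i - x j) / √2 := by
  classical
  let e (k : ι) : EuclideanSpace ℝ ι := EuclideanSpace.single k 1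
  let d : EuclideanSpace ℝ ι := (√2)⁻¹ • (e i + e j)
  have he (k : ι) (x : EuclideanSpace ℝ ι) : ⟪e k, x⟫ = x k := by
    simp [e, EuclideanSpace.inner_single_left]
  have hd (x : EuclideanSpace ℝ ι) : ⟪d, x⟫ = (x i + x j) / √2 := by
    simp only [d, inner_smul_left, inner_add_left, he, conj_trivial, inv_mul_eq_div]
  have hnorm : ‖e i‖ = ‖d‖ := by
    rw [← sq_eq_sq₀ (norm_nonneg _) (norm_nonneg _), ← real_inner_self_eq_norm_sq,
      ← real_inner_self_eq_norm_sq, he, hd]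
    have hei : e i i = 1 := by simp [e]
    have hdi : d i = (√2)⁻¹ := by simp [d, e, hij]
    have hdj : d j = (√2)⁻¹ := by simp [d, e, hij]
    rw [hei, hdi, hdj, ← two_mul, div_eq_mul_inv, mul_assoc, ← mul_inv, mul_self_sqrt zero_le_two,
      mul_inv_cancel₀ two_ne_zero]
  let R := (ℝ ∙ (e i - d))ᗮ.reflection
  have hRi : R (e i) = d := Submodule.reflection_sub hnorm
  have hadjoint (x y : EuclideanSpace ℝ ι) : ⟪R x, y⟫ = ⟪x, R y⟫ := by
    rw [← R.inner_map_map x, Submodule.reflection_reflection]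
  have hRj : R (e j) = √2 • e i - d := by
    have hej : e j = √2 • d - e i := by simp [d]
    rw [hej, map_sub, map_smul, ← hRi, Submodule.reflection_reflection]
  refine ⟨R, fun x ↦ ⟨?_, ?_⟩⟩
  · rw [← he i, ← hadjoint, hRi, hd]
  · rw [← he j, ← hadjoint, hRj, inner_sub_left, inner_smul_left, he, hd, conj_trivial]
    field_simp
    rw [Real.sq_sqrt zero_le_two]
    ring

theorem two_mul_pairMoment_exchange (hK : IsIsotropic K)
    (hint : Integrable fun p ↦ ‖p.1‖ ^ 2 * ‖p.2‖ ^ 2 * K p) {i j : ι} (hij : i ≠ j) :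
    2 * pairMoment K i j j i = pairMoment K i i i i - pairMoment K i i j j := by
  have hcoord := integrable_coord_mul hint
  have hsqrt : √2 ^ 4 = 4 := by
    rw [pow_mul (√2) 2 2, sq_sqrt zero_le_two]
    norm_num
  have hdiff (k : ι) : Integrable fun p ↦ p.1 k * p.1 k * (p.2 i * p.2 i) * K p -
      p.1 k * p.1 k * (p.2 j * p.2 j) * K p :=
    (hcoord k k i i).sub (hcoord k k j j)
  obtain ⟨R, hR⟩ := exists_linearIsometryEquiv_apply_eq_div_sqrt_two hij
  have hrotate : pairMoment K i j j i = 4⁻¹ * (pairMoment K i i i i - pairMoment K i i j j -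
      (pairMoment K j j i i - pairMoment K j j j j)) := by
    have hpoly (p : EuclideanSpace ℝ ι × EuclideanSpace ℝ ι) :
        R p.1 i * R p.1 j * (R p.2 j * R p.2 i) * K p =
          4⁻¹ * (p.1 i * p.1 i * (p.2 i * p.2 i) * K p - p.1 i * p.1 i * (p.2 j * p.2 j) * K p -
            (p.1 j * p.1 j * (p.2 i * p.2 i) * K p -
              p.1 j * p.1 j * (p.2 j * p.2 j) * K p)) := by
      simp only [(hR _).1, (hR _).2]
      field_simp
      rw [hsqrt]
      ring
    rw [← pairMoment_comp hK R]
    simp_rw [hpoly]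
    rw [integral_const_mul, integral_sub (hdiff i) (hdiff j),
      integral_sub (hcoord ..) (hcoord ..), integral_sub (hcoord ..) (hcoord ..)]
    rfl
  rw [hrotate, pairMoment_self_eq hK j i, pairMoment_direct_eq hK hij.symm hij]
  ring

theorem sum_sum_eq_of_offDiag {A : Type*} [CommRing A] {f : ι → ι → A} {a b : A}
    (hdiag : ∀ i, f i i = a) (hoff : ∀ i k, i ≠ k → f i k = b) :
    ∑ i, ∑ k, f i k = Fintype.card ι * a + Fintype.card ι * (Fintype.card ι - 1) * b := by
  classical
  have hf (i k : ι) : f i k = b + if i = k then a - b else 0 := by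
    split_ifs with h
    · rw [← h, hdiag, add_sub_cancel]
    · rw [hoff i k h, add_zero]
  simp only [hf, Finset.sum_add_distrib, Finset.sum_ite_eq, Finset.sum_const, Finset.mem_univ,
    if_true, Finset.card_univ, nsmul_eq_mul]
  ring

theorem card_mul_pairMoment_self (hK : IsIsotropic K)
    (hint : Integrable fun p ↦ ‖p.1‖ ^ 2 * ‖p.2‖ ^ 2 * K p) (i : ι) :
    Fintype.card ι * (Fintype.card ι + 2) * pairMoment K i i i i =
      (∫ p, ‖p.1‖ ^ 2 * ‖p.2‖ ^ 2 * K p) + 2 * ∫ p, ⟪p.1, p.2⟫ ^ 2 * K p := by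
  rw [← sum_sum_pairMoment_direct hint, ← sum_sum_pairMoment_exchange hint]
  simp only [Finset.mul_sum, ← Finset.sum_add_distrib]
  rw [sum_sum_eq_of_offDiag (a := 3 * pairMoment K i i i i) (b := pairMoment K i i i i)]
  · ring
  · intro k
    rw [pairMoment_self_eq hK k i]
    ring
  · intro k l hkl
    rw [two_mul_pairMoment_exchange hK hint hkl, pairMoment_self_eq hK k i]
    ring

theorem card_mul_pairMoment_direct (hK : IsIsotropic K)
    (hint : Integrable fun p ↦ ‖p.1‖ ^ 2 * ‖p.2‖ ^ 2 * K p) {i j : ι} (hij : i ≠ j) :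
    Fintype.card ι * (Fintype.card ι - 1) * (Fintype.card ι + 2) * pairMoment K i i j j =
      (Fintype.card ι + 1) * (∫ p, ‖p.1‖ ^ 2 * ‖p.2‖ ^ 2 * K p) -
        2 * ∫ p, ⟪p.1, p.2⟫ ^ 2 * K p := by
  have hself := card_mul_pairMoment_self hK hint i
  have hsum := sum_sum_eq_of_offDiag (f := fun k l ↦ pairMoment K k k l l)
    (fun k ↦ pairMoment_self_eq hK k i) fun k l hkl ↦ pairMoment_direct_eq hK hkl hij
  rw [sum_sum_pairMoment_direct hint] at hsum
  linear_combination (-(Fintype.card ι : ℝ) - 2) * hsum - hself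

theorem card_mul_pairMoment_exchange (hK : IsIsotropic K)
    (hint : Integrable fun p ↦ ‖p.1‖ ^ 2 * ‖p.2‖ ^ 2 * K p) {i j : ι} (hij : i ≠ j) :
    Fintype.card ι * (Fintype.card ι - 1) * (Fintype.card ι + 2) * pairMoment K i j j i =
      Fintype.card ι * (∫ p, ⟪p.1, p.2⟫ ^ 2 * K p) - ∫ p, ‖p.1‖ ^ 2 * ‖p.2‖ ^ 2 * K p := by
  have hself := card_mul_pairMoment_self hK hint i
  have hsum := sum_sum_eq_of_offDiag (f := fun k l ↦ pairMoment K k l l k)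
    (fun k ↦ pairMoment_self_eq hK k i) fun k l hkl ↦ pairMoment_exchange_eq hK hkl hij
  rw [sum_sum_pairMoment_exchange hint] at hsum
  linear_combination (-(Fintype.card ι : ℝ) - 2) * hsum - hself

end IsotropicMoments

section Orbitals

/-- The Slater `2p` orbital of exponent `Z` along the `i`-th axis. -/
noncomputable def orbital2p (Z : ℝ) (i : Fin 3) (x : EuclideanSpace ℝ (Fin 3)) : ℝ :=
  Z ^ ((5 : ℝ) / 2) / √(32 * π) * x i * exp (-Z * ‖x‖ / 2)

/-- The Coulomb integral `(ab|cd)` of the charge distributions `ab` and `cd`. -/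
noncomputable def coulombIntegral (a b c d : EuclideanSpace ℝ (Fin 3) → ℝ) : ℝ :=
  ∫ x, ∫ y, a x * b x * (c y * d y) / ‖x - y‖

theorem orbital2p_normalization_pow_four {Z : ℝ} (hZ : 0 < Z) :
    (Z ^ ((5 : ℝ) / 2) / √(32 * π)) ^ 4 = Z ^ 10 / (1024 * π ^ 2) := by
  rw [div_pow, ← rpow_mul_natCast hZ.le, pow_mul √(32 * π) 2 2, sq_sqrt (by positivity)]
  have hrpow : Z ^ ((5 : ℝ) / 2 * (4 : ℕ)) = Z ^ 10 := by
    rw [← rpow_natCast]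
    norm_num
  rw [hrpow, mul_pow]
  norm_num

variable {Z : ℝ} {i j : Fin 3}

theorem coulombIntegral_orbital2p (hZ : 0 < Z) (i j k l : Fin 3) :
    coulombIntegral (orbital2p Z i) (orbital2p Z j) (orbital2p Z k) (orbital2p Z l) =
      Z ^ 10 / (1024 * π ^ 2) * pairMoment (slaterCoulombKernel Z) i j k l := by
  have hint := integrable_coord_mul (integrable_norm_sq_mul_norm_sq_mul_slaterCoulombKernel
    (finrank_euclideanSpace_fin (𝕜 := ℝ) (n := 3)) hZ) i j k l
  have hexp (x : EuclideanSpace ℝ (Fin 3)) : exp (-Z * ‖x‖) = exp (-Z * ‖x‖ / 2) ^ 2 := by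
    rw [← exp_nat_mul]
    congr 1
    push_cast
    ring
  rw [pairMoment, Measure.volume_eq_prod, integral_prod _ hint, coulombIntegral,
    ← orbital2p_normalization_pow_four hZ]
  simp only [← integral_const_mul]
  congr with x
  congr with y
  simp only [orbital2p, slaterCoulombKernel, hexp]
  ring

theorem coulombIntegral_orbital2p_self (hZ : 0 < Z) (i : Fin 3) :
    coulombIntegral (orbital2p Z i) (orbital2p Z i) (orbital2p Z i) (orbital2p Z i) =
      501 / 2560 * Z := by
  have hE := finrank_euclideanSpace_fin (𝕜 := ℝ) (n := 3)
  have hmoment := card_mul_pairMoment_self (isIsotropic_slaterCoulombKernel Z)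
    (integrable_norm_sq_mul_norm_sq_mul_slaterCoulombKernel hE hZ) i
  rw [integral_norm_sq_mul_norm_sq_mul_slaterCoulombKernel hE hZ,
    integral_inner_sq_mul_slaterCoulombKernel hE hZ, Fintype.card_fin] at hmoment
  have hvalue : pairMoment (slaterCoulombKernel Z) i i i i = 1002 / 5 * π ^ 2 / Z ^ 9 := by
    push_cast at hmoment
    linear_combination hmoment / 15
  rw [coulombIntegral_orbital2p hZ, hvalue]
  field

theorem coulombIntegral_orbital2p_direct (hZ : 0 < Z) (hij : i ≠ j) :
    coulombIntegral (orbital2p Z i) (orbital2p Z i) (orbital2p Z j) (orbital2p Z j) =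
      447 / 2560 * Z := by
  have hE := finrank_euclideanSpace_fin (𝕜 := ℝ) (n := 3)
  have hmoment := card_mul_pairMoment_direct (isIsotropic_slaterCoulombKernel Z)
    (integrable_norm_sq_mul_norm_sq_mul_slaterCoulombKernel hE hZ) hij
  rw [integral_norm_sq_mul_norm_sq_mul_slaterCoulombKernel hE hZ,
    integral_inner_sq_mul_slaterCoulombKernel hE hZ, Fintype.card_fin] at hmoment
  have hvalue : pairMoment (slaterCoulombKernel Z) i i j j = 894 / 5 * π ^ 2 / Z ^ 9 := by
    push_cast at hmoment
    linear_combination hmoment / 30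
  rw [coulombIntegral_orbital2p hZ, hvalue]
  field

theorem coulombIntegral_orbital2p_exchange (hZ : 0 < Z) (hij : i ≠ j) :
    coulombIntegral (orbital2p Z i) (orbital2p Z j) (orbital2p Z j) (orbital2p Z i) =
      27 / 2560 * Z := by
  have hE := finrank_euclideanSpace_fin (𝕜 := ℝ) (n := 3)
  have hmoment := card_mul_pairMoment_exchange (isIsotropic_slaterCoulombKernel Z)
    (integrable_norm_sq_mul_norm_sq_mul_slaterCoulombKernel hE hZ) hij
  rw [integral_norm_sq_mul_norm_sq_mul_slaterCoulombKernel hE hZ,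
    integral_inner_sq_mul_slaterCoulombKernel hE hZ, Fintype.card_fin] at hmoment
  have hvalue : pairMoment (slaterCoulombKernel Z) i j j i = 54 / 5 * π ^ 2 / Z ^ 9 := by
    push_cast at hmoment
    linear_combination hmoment / 30
  rw [coulombIntegral_orbital2p hZ, hvalue]
  field

end Orbitals

/-- The Coulomb and exchange integrals among the 2p Slater orbitals:
`(33|33) = (501/2560)Z₃`, `(33|44) = (447/2560)Z₃`, `(34|43) = (27/2560)Z₃`. -/
theorem coulomb_exchange_2p (Z₃ : ℝ) (hZ₃ : 0 < Z₃)
    (φ3 φ4 : EuclideanSpace ℝ (Fin 3) → ℝ)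
    (hφ3 : ∀ x, φ3 x = Z₃ ^ ((5:ℝ)/2) / Real.sqrt (32 * Real.pi) * x 2 *
      Real.exp (-Z₃ * ‖x‖ / 2))
    (hφ4 : ∀ x, φ4 x = Z₃ ^ ((5:ℝ)/2) / Real.sqrt (32 * Real.pi) * x 0 *
      Real.exp (-Z₃ * ‖x‖ / 2)) :
    (∫ x : EuclideanSpace ℝ (Fin 3), ∫ y : EuclideanSpace ℝ (Fin 3),
        (φ3 x) ^ 2 * (φ3 y) ^ 2 / ‖x - y‖) = 501 / 2560 * Z₃ ∧
    (∫ x : EuclideanSpace ℝ (Fin 3), ∫ y : EuclideanSpace ℝ (Fin 3),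
        (φ3 x) ^ 2 * (φ4 y) ^ 2 / ‖x - y‖) = 447 / 2560 * Z₃ ∧
    (∫ x : EuclideanSpace ℝ (Fin 3), ∫ y : EuclideanSpace ℝ (Fin 3),
        (φ3 x * φ4 x) * (φ4 y * φ3 y) / ‖x - y‖) = 27 / 2560 * Z₃ := by
  obtain rfl : φ3 = orbital2p Z₃ 2 := funext hφ3
  obtain rfl : φ4 = orbital2p Z₃ 0 := funext hφ4
  have h20 : (2 : Fin 3) ≠ 0 := by decide
  simp only [sq]
  exact ⟨coulombIntegral_orbital2p_self hZ₃ 2, coulombIntegral_orbital2p_direct hZ₃ h20,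
    coulombIntegral_orbital2p_exchange hZ₃ h20⟩
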